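/- Let n ≥ 7 with n ≡ 1 (mod 6), and let N := 2^{(n−1)/6}. There exists a polytope P ⊆ [0,1]^n (the convex hull of finitely many points) such that L^2(P) = P_I and P_I ⊊ ⋂_{Q ∈ S_N(P)} Q; that is, there exists a point x ∈ P \ P_I that belongs to every branch-and-bound relaxation of P with at most 2^{(n−1)/6} leaves, while lift-and-project retrieves the integer hull in two rounds. -/

import Mathlib

open Set

def cube (n : ℕ) : Set (Fin n → ℝ) := {x | ∀ i, 0 ≤ x i ∧ x i ≤ 1}

def corners (n : ℕ) : Set (Fin n → ℝ) := {x | ∀ i, x i = 0 ∨ x i = 1}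

def integerHull (n : ℕ) (P : Set (Fin n → ℝ)) : Set (Fin n → ℝ) :=
  convexHull ℝ (P ∩ corners n)

def Lop (n : ℕ) (P : Set (Fin n → ℝ)) : Set (Fin n → ℝ) :=
  ⋂ i : Fin n, convexHull ℝ ((P ∩ {x | x i = 0}) ∪ (P ∩ {x | x i = 1}))

def Lk (n : ℕ) : ℕ → Set (Fin n → ℝ) → Set (Fin n → ℝ)
  | 0, P => P
  | k + 1, P => Lop n (Lk n k P)

/-- `S_N(P)`: the family of branch-and-bound relaxations of `P` with at most `N` leaves. -/
def SN (n : ℕ) : ℕ → Set (Fin n → ℝ) → Set (Set (Fin n → ℝ))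
  | 0, _ => ∅
  | N + 1, P => {P} ∪ {Q | ∃ j : Fin n, ∃ N₀ N₁ : ℕ, ∃ _ : 1 ≤ N₀, ∃ _ : 1 ≤ N₁,
      ∃ _ : N₀ + N₁ ≤ N + 1,
      ∃ A, ∃ _ : A ∈ SN n N₀ (P ∩ {x | x j = 0}),
      ∃ B, ∃ _ : B ∈ SN n N₁ (P ∩ {x | x j = 1}),
      Q = convexHull ℝ (A ∪ B)}
  termination_by N => N
  decreasing_by all_goals omega

/-!
The polytope `P` is the convex hull of the bottom face `x t = 0` of the cube and of finitely many
points in the top face `x t = 1`. Of the other coordinates of such a point, `d + 1` pairs each hold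
`(1, 0)`, `(0, 1)` or `(2/3, 2/3)`, the last one at least once, and the rest are `0`.

One round of `L` cuts every pair down to sum at most `1` in the top face, while the average pair sum
of every top vertex exceeds `1`. So `L(P)` misses the top face, and branching on `t` in the second
round leaves the bottom face, which is the integer hull.

For branch and bound, an adversary decides a pair only when a branching queries it; either answer is
then available, so it can move to the child with fewer leaves. As long as at most `d` pairs are
decided there remains a top vertex, so with at most `2 ^ d` leaves every relaxation contains a
top vertex `w`. It also contains `1 - w`, which lies in the bottom face, hence their midpoint
`(1/2, …, 1/2)`, whatever `w` is.
-/

theorem linear_le_of_mem_convexHull {E : Type*} [AddCommGroup E] [Module ℝ E] (f : E →ₗ[ℝ] ℝ)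
    {s : Set E} {c : ℝ} (hs : ∀ v ∈ s, f v ≤ c) {x : E} (hx : x ∈ convexHull ℝ s) : f x ≤ c :=
  convexHull_min hs (convex_halfSpace_le f.isLinear c) hx

section Relaxations

variable {n : ℕ} {P Q : Set (Fin n → ℝ)}

theorem convex_cube : Convex ℝ (cube n) := by
  have cube_eq_pi : cube n = univ.pi fun _ => Icc (0 : ℝ) 1 := by
    ext x
    simp [cube, Pi.le_def, forall_and]
  rw [cube_eq_pi]
  exact convex_pi fun _ _ => convex_Icc 0 1

theorem corners_subset_cube : corners n ⊆ cube n := by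
  intro x hx i
  rcases hx i with h | h <;> simp [h]

theorem convex_Lop (P : Set (Fin n → ℝ)) : Convex ℝ (Lop n P) :=
  convex_iInter fun _ => convex_convexHull ℝ _

theorem Lop_subset (hP : Convex ℝ P) (i : Fin n) : Lop n P ⊆ P :=
  (iInter_subset _ i).trans <|
    convexHull_min (union_subset inter_subset_left inter_subset_left) hP

theorem inter_corners_subset_Lop (P : Set (Fin n → ℝ)) : P ∩ corners n ⊆ Lop n P := by
  rintro x ⟨hxP, hx⟩
  refine mem_iInter.2 fun i => subset_convexHull ℝ _ ?_
  exact (hx i).imp (fun h => ⟨hxP, h⟩) fun h => ⟨hxP, h⟩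

theorem inter_corners_subset_Lk (P : Set (Fin n → ℝ)) (k : ℕ) : P ∩ corners n ⊆ Lk n k P := by
  induction k with
  | zero => exact inter_subset_left
  | succ k ih => exact fun x hx => inter_corners_subset_Lop _ ⟨ih hx, hx.2⟩

theorem SN_induction
    {motive : (N : ℕ) → (P Q : Set (Fin n → ℝ)) → Q ∈ SN n N P → Prop}
    (leaf : ∀ N P (h : P ∈ SN n (N + 1) P), motive (N + 1) P P h)
    (branch : ∀ N N₀ N₁ P A B j (hA : A ∈ SN n N₀ (P ∩ {x | x j = 0}))
      (hB : B ∈ SN n N₁ (P ∩ {x | x j = 1})) (h : convexHull ℝ (A ∪ B) ∈ SN n N P),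
      1 ≤ N₀ → 1 ≤ N₁ → N₀ + N₁ ≤ N → motive N₀ _ A hA → motive N₁ _ B hB → motive N P _ h)
    (N : ℕ) (P Q : Set (Fin n → ℝ)) (hQ : Q ∈ SN n N P) : motive N P Q hQ := by
  induction N using Nat.strong_induction_on generalizing P Q with
  | _ N ih =>
    cases N with
    | zero => simp [SN] at hQ
    | succ N =>
      have hcases := hQ
      rw [SN] at hcases
      rcases hcases with rfl | ⟨j, N₀, N₁, h₀, h₁, hN, A, hA, B, hB, rfl⟩
      · exact leaf N _ hQ
      · exact branch _ N₀ N₁ P A B j hA hB hQ h₀ h₁ hN (ih N₀ (by lia) _ _ hA)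
          (ih N₁ (by lia) _ _ hB)

theorem convex_of_mem_SN (hP : Convex ℝ P) {N : ℕ} (hQ : Q ∈ SN n N P) : Convex ℝ Q := by
  induction N, P, Q, hQ using SN_induction with
  | leaf => exact hP
  | branch => exact convex_convexHull ℝ _

theorem inter_corners_subset_of_mem_SN {N : ℕ} (hQ : Q ∈ SN n N P) : P ∩ corners n ⊆ Q := by
  induction N, P, Q, hQ using SN_induction with
  | leaf => exact inter_subset_left
  | branch _ _ _ P A B j _ _ _ _ _ _ ihA ihB =>
    rintro x ⟨hxP, hx⟩
    refine subset_convexHull ℝ _ ?_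
    exact (hx j).imp (fun h => ihA ⟨⟨hxP, h⟩, hx⟩) fun h => ihB ⟨⟨hxP, h⟩, hx⟩

theorem integerHull_subset_of_mem_SN (hP : Convex ℝ P) {N : ℕ} (hQ : Q ∈ SN n N P) :
    integerHull n P ⊆ Q :=
  convexHull_min (inter_corners_subset_of_mem_SN hQ) (convex_of_mem_SN hP hQ)

-- A Prover-Delayer game: `Safe d R` says that the adversary can still gain `d` points from `R`.
-- It gains a point at a branching where both answers are open to it, and there it can pass to the
-- child with at most half of the leaves.
theorem inter_nonempty_of_mem_SN {W : Set (Fin n → ℝ)} {Safe : ℕ → Set (Fin n → ℝ) → Prop}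
    (hW : ∀ d R, Safe d R → (R ∩ W).Nonempty)
    (hbranch : ∀ d R j, Safe (d + 1) R →
      Safe (d + 1) (R ∩ {x | x j = 0}) ∨ Safe (d + 1) (R ∩ {x | x j = 1}) ∨
        Safe d (R ∩ {x | x j = 0}) ∧ Safe d (R ∩ {x | x j = 1}))
    {d N : ℕ} (hP : Safe d P) (hN : N ≤ 2 ^ d) (hQ : Q ∈ SN n N P) : (Q ∩ W).Nonempty := by
  induction N, P, Q, hQ using SN_induction generalizing d with
  | leaf N P => exact hW d P hP
  | branch N N₀ N₁ P A B j _ _ _ h₀ h₁ hsum ihA ihB =>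
    have of_left (hA : (A ∩ W).Nonempty) : (convexHull ℝ (A ∪ B) ∩ W).Nonempty :=
      hA.mono <| inter_subset_inter_left W <|
        subset_union_left.trans (subset_convexHull ℝ _)
    have of_right (hB : (B ∩ W).Nonempty) : (convexHull ℝ (A ∪ B) ∩ W).Nonempty :=
      hB.mono <| inter_subset_inter_left W <|
        subset_union_right.trans (subset_convexHull ℝ _)
    obtain ⟨d, rfl⟩ : ∃ k, d = k + 1 := by
      refine Nat.exists_eq_succ_of_ne_zero ?_
      rintro rfl
      lia
    rcases hbranch d P j hP with h | h | ⟨h0, h1⟩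
    · exact of_left (ihA h (by lia))
    · exact of_right (ihB h (by lia))
    · rw [pow_succ] at hN
      rcases le_or_gt N₀ (2 ^ d) with hle | hlt
      · exact of_left (ihA h0 hle)
      · exact of_right (ihB h1 (by lia))

end Relaxations

section BottomFace

variable {n : ℕ} {t : Fin n} {P Q : Set (Fin n → ℝ)}

/-- The vertices of the facet `x t = 0` of the cube, the integer points of the constructed
polytope. -/
def bottomCorners (t : Fin n) : Set (Fin n → ℝ) := {x | x ∈ corners n ∧ x t = 0}

theorem finite_corners : (corners n).Finite := by
  refine (Set.Finite.pi' fun _ : Fin n => Set.toFinite ({0, 1} : Set ℝ)).subset fun x hx i => ?_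
  simpa using hx i

theorem convex_coord_eq (t : Fin n) (c : ℝ) : Convex ℝ {x : Fin n → ℝ | x t = c} :=
  convex_hyperplane (LinearMap.proj (R := ℝ) (φ := fun _ => ℝ) t).isLinear c

theorem convexHull_bottomCorners (t : Fin n) :
    convexHull ℝ (bottomCorners t) = {x | x ∈ cube n ∧ x t = 0} := by
  have hpi : bottomCorners t = univ.pi fun i => if i = t then {0} else {0, 1} := by
    ext x
    constructor
    · rintro ⟨hx, ht⟩ i -
      rcases eq_or_ne i t with rfl | h
      · simpa using ht
      · simpa [h] using hx i
    · intro hx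
      have ht : x t = 0 := by simpa using hx t trivial
      refine ⟨fun i => ?_, ht⟩
      rcases eq_or_ne i t with rfl | h
      · exact Or.inl ht
      · simpa [h] using hx i trivial
  apply Subset.antisymm
  · exact convexHull_min (fun x hx => ⟨corners_subset_cube hx.1, hx.2⟩) <|
      convex_cube.inter (convex_coord_eq t 0)
  · rintro x ⟨hx, ht⟩
    rw [hpi, convexHull_pi]
    intro i _
    rcases eq_or_ne i t with rfl | h
    · simpa using ht
    · simp only [if_neg h, convexHull_pair, segment_eq_Icc zero_le_one]
      exact hx i

theorem Lk_two_eq_integerHull (hP : Convex ℝ P) (hcube : P ⊆ cube n) (hbot : bottomCorners t ⊆ P)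
    (htop : ∀ x ∈ Lop n P, x t ≠ 1) : Lk n 2 P = integerHull n P := by
  apply Subset.antisymm
  · refine (iInter_subset _ t).trans (convexHull_min ?_ (convex_convexHull ℝ _))
    rintro x (⟨hx, h0⟩ | ⟨hx, h1⟩)
    · have hxbot : x ∈ convexHull ℝ (bottomCorners t) := by
        rw [convexHull_bottomCorners]
        exact ⟨hcube (Lop_subset hP t hx), h0⟩
      have hbotint : bottomCorners t ⊆ P ∩ corners n := fun y hy => ⟨hbot hy, hy.1⟩
      exact convexHull_mono hbotint hxbot
    · exact absurd h1 (htop x hx)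
  · exact convexHull_min (inter_corners_subset_Lk P 2) (convex_Lop _)

theorem eq_zero_of_mem_integerHull (htop : ∀ x ∈ Lop n P, x t ≠ 1) {x : Fin n → ℝ}
    (hx : x ∈ integerHull n P) : x t = 0 := by
  have hcorners : P ∩ corners n ⊆ {y | y t = 0} := fun y hy =>
    (hy.2 t).resolve_right (htop y (inter_corners_subset_Lop P hy))
  exact convexHull_min hcorners (convex_coord_eq t 0) hx

theorem center_mem_of_bottomCorners_subset (hQ : Convex ℝ Q) (hbot : bottomCorners t ⊆ Q)
    {w : Fin n → ℝ} (hwQ : w ∈ Q) (hw : w ∈ cube n) (hwt : w t = 1) : (fun _ => 1 / 2) ∈ Q := by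
  have hreflect : 1 - w ∈ Q := by
    refine convexHull_min hbot hQ ?_
    rw [convexHull_bottomCorners]
    exact ⟨fun i => by have := hw i; simp [this], by simp [hwt]⟩
  convert hQ hwQ hreflect (a := 1 / 2) (b := 1 / 2) (by norm_num) (by norm_num) (by norm_num)
  simp only [Pi.add_apply, Pi.smul_apply, Pi.sub_apply, Pi.one_apply, smul_eq_mul]
  ring

theorem integerHull_ssubset_biInter_SN {N : ℕ} (hP : Convex ℝ P) (hbot : bottomCorners t ⊆ P)
    (htop : ∀ x ∈ Lop n P, x t ≠ 1)
    (hSN : ∀ Q ∈ SN n N P, (Q ∩ {w | w ∈ cube n ∧ w t = 1}).Nonempty) :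
    integerHull n P ⊂ ⋂ Q ∈ SN n N P, Q := by
  rw [ssubset_iff_of_subset (subset_iInter₂ fun _ => integerHull_subset_of_mem_SN hP)]
  refine ⟨fun _ => 1 / 2, mem_iInter₂.2 fun Q hQ => ?_, fun h => ?_⟩
  · obtain ⟨w, hwQ, hw, hwt⟩ := hSN Q hQ
    have hbotQ : bottomCorners t ⊆ Q := fun x hx =>
      inter_corners_subset_of_mem_SN hQ ⟨hbot hx, hx.1⟩
    exact center_mem_of_bottomCorners_subset (convex_of_mem_SN hP hQ) hbotQ hwQ hw hwt
  · have := eq_zero_of_mem_integerHull htop h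
    norm_num at this

end BottomFace

section PairedPolytope

variable {n : ℕ} {ι : Type*} (e : Option (ι × Bool) ↪ Fin n)

/-- The top vertex encoding the partial assignment `a`. Coordinate `e none` is the top flag and
`e (some (g, false))`, `e (some (g, true))` form the pair `g`: it is the unit vector of `b` if
`a g = some b`, and `(2/3, 2/3)` if `a g = none`. Coordinates outside the range of `e` are `0`. -/
noncomputable def pairPoint (a : ι → Option Bool) : Fin n → ℝ :=
  Function.extend e
    (fun o => o.elim 1 fun p => (a p.1).elim (2 / 3) fun b => if b = p.2 then 1 else 0) 0

/-- The top vertices whose partial assignment extends `a` and is not total: those still available to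
the adversary after the decisions recorded in `a`. -/
def pairCell (a : ι → Option Bool) : Set (Fin n → ℝ) :=
  pairPoint e '' {a' | (∀ g b, a g = some b → a' g = some b) ∧ ∃ g, a' g = none}

/-- The vertices of the polytope on which branch and bound is exponentially weaker than two rounds
of lift-and-project: a bottom facet of the cube and all non-total top vertices. -/
def pairVertices : Set (Fin n → ℝ) := bottomCorners (e none) ∪ pairCell e fun _ => none

variable {e}

theorem pairPoint_none (a : ι → Option Bool) : pairPoint e a (e none) = 1 := by
  simp [pairPoint, e.injective.extend_apply]

theorem pairPoint_some (a : ι → Option Bool) (g : ι) (c : Bool) :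
    pairPoint e a (e (some (g, c))) = (a g).elim (2 / 3) fun b => if b = c then 1 else 0 := by
  simp [pairPoint, e.injective.extend_apply]

theorem pairPoint_of_notMem_range (a : ι → Option Bool) {i : Fin n} (hi : i ∉ range e) :
    pairPoint e a i = 0 :=
  Function.extend_apply' _ _ _ hi

theorem pairPoint_mem_cube (a : ι → Option Bool) : pairPoint e a ∈ cube n := by
  intro i
  by_cases hi : i ∈ range e
  · obtain ⟨_ | ⟨g, c⟩, rfl⟩ := hi
    · simp [pairPoint_none]
    · rw [pairPoint_some]
      rcases a g with _ | b
      · norm_num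
      · dsimp only [Option.elim]
        split_ifs <;> norm_num
  · simp [pairPoint_of_notMem_range a hi]

theorem finite_pairVertices [Finite ι] : (pairVertices e).Finite :=
  (finite_corners.subset fun _ hx => hx.1).union ((Set.toFinite _).image _)

theorem convexHull_pairVertices_subset_cube : convexHull ℝ (pairVertices e) ⊆ cube n := by
  refine convexHull_min (union_subset (fun x hx => corners_subset_cube hx.1) ?_) convex_cube
  rintro _ ⟨a, -, rfl⟩
  exact pairPoint_mem_cube a

theorem pair_le_three_of_mem_convexHull (g : ι) {x : Fin n → ℝ}
    (hx : x ∈ convexHull ℝ (pairVertices e)) :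
    x (e (some (g, true))) + x (e none) + 2 * x (e (some (g, false))) ≤ 3 := by
  have hvertices : ∀ v ∈ pairVertices e,
      v (e (some (g, true))) + v (e none) + 2 * v (e (some (g, false))) ≤ 3 := by
    rintro v (⟨hv, hv0⟩ | ⟨a, -, rfl⟩)
    · have htrue := (corners_subset_cube hv (e (some (g, true)))).2
      have hfalse := (corners_subset_cube hv (e (some (g, false)))).2
      linarith
    · rcases h : a g with _ | _ | _ <;> norm_num [pairPoint_none, pairPoint_some, h]
  let π (i : Fin n) : (Fin n → ℝ) →ₗ[ℝ] ℝ := LinearMap.proj i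
  exact linear_le_of_mem_convexHull
    (π (e (some (g, true))) + π (e none) + (2 : ℝ) • π (e (some (g, false)))) hvertices hx

theorem card_add_third_mul_flag_le_sum [Fintype ι] {x : Fin n → ℝ}
    (hx : x ∈ convexHull ℝ (pairVertices e)) :
    (Fintype.card ι + 1 / 3 : ℝ) * x (e none) ≤ ∑ p, x (e (some p)) := by
  let f : (Fin n → ℝ) →ₗ[ℝ] ℝ := (Fintype.card ι + 1 / 3 : ℝ) • LinearMap.proj (e none) -
    ∑ p, LinearMap.proj (e (some p))
  have hf (y : Fin n → ℝ) :
      f y = (Fintype.card ι + 1 / 3 : ℝ) * y (e none) - ∑ p, y (e (some p)) := by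
    simp [f]
  rw [← sub_nonpos, ← hf]
  refine linear_le_of_mem_convexHull f (fun v hv => ?_) hx
  rw [hf, sub_nonpos]
  rcases hv with ⟨hv, hv0⟩ | ⟨a, ⟨-, g₀, hg₀⟩, rfl⟩
  · rw [hv0, mul_zero]
    exact Finset.sum_nonneg fun p _ => (corners_subset_cube hv _).1
  · classical
    have hpair (g : ι) : 1 + (if g = g₀ then 1 / 3 else 0 : ℝ) ≤
        pairPoint e a (e (some (g, true))) + pairPoint e a (e (some (g, false))) := by
      rcases eq_or_ne g g₀ with rfl | hne
      · norm_num [pairPoint_some, hg₀]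
      · rcases h : a g with _ | _ | _ <;> norm_num [pairPoint_some, h, hne]
    calc (Fintype.card ι + 1 / 3 : ℝ) * pairPoint e a (e none)
        = ∑ g, (1 + if g = g₀ then 1 / 3 else 0 : ℝ) := by
          simp [pairPoint_none, Finset.sum_add_distrib]
      _ ≤ ∑ g, (pairPoint e a (e (some (g, true))) + pairPoint e a (e (some (g, false)))) :=
          Finset.sum_le_sum fun g _ => hpair g
      _ = ∑ p, pairPoint e a (e (some p)) := by
          simp only [Fintype.sum_prod_type, Fintype.sum_bool]

theorem pair_le_two_of_mem_Lop (g : ι) {x : Fin n → ℝ}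
    (hx : x ∈ Lop n (convexHull ℝ (pairVertices e))) :
    x (e (some (g, true))) + x (e none) + x (e (some (g, false))) ≤ 2 := by
  let i := e (some (g, false))
  let P := convexHull ℝ (pairVertices e)
  have hfaces : ∀ v ∈ (P ∩ {y | y i = 0}) ∪ (P ∩ {y | y i = 1}),
      v (e (some (g, true))) + v (e none) + v i ≤ 2 := by
    rintro v (⟨hv, h0 : v i = 0⟩ | ⟨hv, h1 : v i = 1⟩)
    · have htrue := (convexHull_pairVertices_subset_cube hv (e (some (g, true)))).2
      have hflag := (convexHull_pairVertices_subset_cube hv (e none)).2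
      linarith
    · linarith [pair_le_three_of_mem_convexHull g hv]
  let π (j : Fin n) : (Fin n → ℝ) →ₗ[ℝ] ℝ := LinearMap.proj j
  exact linear_le_of_mem_convexHull (π (e (some (g, true))) + π (e none) + π i) hfaces
    (mem_iInter.1 hx i)

theorem flag_ne_one_of_mem_Lop [Finite ι] {x : Fin n → ℝ}
    (hx : x ∈ Lop n (convexHull ℝ (pairVertices e))) : x (e none) ≠ 1 := by
  intro h1
  cases nonempty_fintype ι
  have hlower := card_add_third_mul_flag_le_sum (Lop_subset (convex_convexHull ℝ _) (e none) hx)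
  have hupper : ∑ p, x (e (some p)) ≤ Fintype.card ι :=
    calc ∑ p, x (e (some p))
        = ∑ g, (x (e (some (g, true))) + x (e (some (g, false)))) := by
          simp only [Fintype.sum_prod_type, Fintype.sum_bool]
      _ ≤ ∑ _g : ι, 1 := Finset.sum_le_sum fun g _ => by linarith [pair_le_two_of_mem_Lop g hx]
      _ = Fintype.card ι := by simp
  rw [h1] at hlower
  linarith

theorem eq_of_mem_pairCell {a : ι → Option Bool} {g : ι} {b : Bool} (ha : a g = some b)
    {x : Fin n → ℝ} (hx : x ∈ pairCell e a) (c : Bool) :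
    x (e (some (g, c))) = if b = c then 1 else 0 := by
  obtain ⟨a', ⟨hext, -⟩, rfl⟩ := hx
  simp [pairPoint_some, hext g b ha]

theorem pairCell_update_subset [DecidableEq ι] {a : ι → Option Bool} {g : ι} (hg : a g = none)
    (b : Option Bool) : pairCell e (Function.update a g b) ⊆ pairCell e a := by
  refine image_mono fun a' ha' => ⟨fun g' b' h => ha'.1 g' b' ?_, ha'.2⟩
  have hne : g' ≠ g := by
    rintro rfl
    simp [hg] at h
  rwa [Function.update_of_ne hne]

theorem pairCell_branch [DecidableEq ι] (a : ι → Option Bool) (j : Fin n) :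
    (∃ v, (v = 0 ∨ v = 1) ∧ pairCell e a ⊆ {x | x j = v}) ∨
      ∃ g, a g = none ∧ ∃ c, pairCell e (Function.update a g (some !c)) ⊆ {x | x j = 0} ∧
        pairCell e (Function.update a g (some c)) ⊆ {x | x j = 1} := by
  by_cases hj : j ∈ range e
  · obtain ⟨_ | ⟨g, c⟩, rfl⟩ := hj
    · refine Or.inl ⟨1, Or.inr rfl, ?_⟩
      rintro _ ⟨a', -, rfl⟩
      exact pairPoint_none a'
    · rcases ha : a g with _ | b
      · refine Or.inr ⟨g, ha, c, fun x hx => ?_, fun x hx => ?_⟩ <;>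
          simpa using eq_of_mem_pairCell (Function.update_self g _ a) hx c
      · refine Or.inl ⟨if b = c then 1 else 0, (ite_eq_or_eq _ _ _).symm, fun x hx => ?_⟩
        exact eq_of_mem_pairCell ha hx c
  · refine Or.inl ⟨0, Or.inl rfl, ?_⟩
    rintro _ ⟨a', -, rfl⟩
    exact pairPoint_of_notMem_range a' hj

open Finset in
theorem card_undecided_update [Fintype ι] [DecidableEq ι] {a : ι → Option Bool} {g : ι}
    (hg : a g = none) (b : Bool) :
    #{g' | Function.update a g (some b) g' = none} + 1 = #{g' | a g' = none} := by
  have herase : ({g' | Function.update a g (some b) g' = none} : Finset ι) =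
      ({g' | a g' = none} : Finset ι).erase g := by
    ext g'
    rcases eq_or_ne g' g with rfl | hne <;> simp [*]
  rw [herase]
  exact Finset.card_erase_add_one (by simpa using hg)

open Finset in
/-- The positions of the Prover-Delayer game on `R` with at least `d` points still to be gained:
`R` contains all top vertices extending some partial assignment with more than `d` undecided
pairs. -/
def PairSafe [Fintype ι] (e : Option (ι × Bool) ↪ Fin n) (d : ℕ) (R : Set (Fin n → ℝ)) : Prop :=
  ∃ a : ι → Option Bool, d < #{g | a g = none} ∧ pairCell e a ⊆ R

theorem PairSafe.inter_nonempty [Fintype ι] {d : ℕ} {R : Set (Fin n → ℝ)}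
    (hR : PairSafe e d R) : (R ∩ {w | w ∈ cube n ∧ w (e none) = 1}).Nonempty := by
  obtain ⟨a, hcard, hsub⟩ := hR
  obtain ⟨g, hg⟩ := Finset.card_pos.1 (d.zero_le.trans_lt hcard)
  exact ⟨pairPoint e a, hsub ⟨a, ⟨fun _ _ => id, g, by simpa using hg⟩, rfl⟩,
    pairPoint_mem_cube a, pairPoint_none a⟩

theorem PairSafe.branch [Fintype ι] {d : ℕ} {R : Set (Fin n → ℝ)} (j : Fin n)
    (hR : PairSafe e (d + 1) R) :
    PairSafe e (d + 1) (R ∩ {x | x j = 0}) ∨ PairSafe e (d + 1) (R ∩ {x | x j = 1}) ∨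
      PairSafe e d (R ∩ {x | x j = 0}) ∧ PairSafe e d (R ∩ {x | x j = 1}) := by
  classical
  obtain ⟨a, hcard, hsub⟩ := hR
  rcases pairCell_branch a j with ⟨v, rfl | rfl, hv⟩ | ⟨g, hg, c, h0, h1⟩
  · exact Or.inl ⟨a, hcard, subset_inter hsub hv⟩
  · exact Or.inr (Or.inl ⟨a, hcard, subset_inter hsub hv⟩)
  · have hupdate (b : Bool) : d < Finset.card {g' | Function.update a g (some b) g' = none} := by
      have := card_undecided_update hg b
      lia
    have hsub_update (b : Bool) : pairCell e (Function.update a g (some b)) ⊆ R :=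
      (pairCell_update_subset hg _).trans hsub
    exact Or.inr (Or.inr ⟨⟨_, hupdate !c, subset_inter (hsub_update _) h0⟩,
      ⟨_, hupdate c, subset_inter (hsub_update _) h1⟩⟩)

theorem inter_nonempty_of_mem_SN_convexHull_pairVertices [Fintype ι] {N d : ℕ}
    (hd : d < Fintype.card ι) (hN : N ≤ 2 ^ d) {Q : Set (Fin n → ℝ)}
    (hQ : Q ∈ SN n N (convexHull ℝ (pairVertices e))) :
    (Q ∩ {w | w ∈ cube n ∧ w (e none) = 1}).Nonempty := by
  refine inter_nonempty_of_mem_SN (Safe := PairSafe e) (fun _ _ => PairSafe.inter_nonempty)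
    (fun _ _ => PairSafe.branch) ⟨fun _ => none, by simpa using hd, ?_⟩ hN hQ
  exact subset_union_right.trans (subset_convexHull ℝ _)

end PairedPolytope

theorem stmt14_general (n d : ℕ) (hd : 2 * d + 3 ≤ n) :
    ∃ (V : Set (Fin n → ℝ)) (P : Set (Fin n → ℝ)), V.Finite ∧ P = convexHull ℝ V ∧
      P ⊆ cube n ∧
      Lk n 2 P = integerHull n P ∧
      integerHull n P ⊂ ⋂ Q ∈ SN n (2 ^ d) P, Q := by
  obtain ⟨e⟩ : Nonempty (Option (Fin (d + 1) × Bool) ↪ Fin n) := by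
    apply Function.Embedding.nonempty_of_card_le
    simp only [Fintype.card_option, Fintype.card_prod, Fintype.card_fin, Fintype.card_bool]
    lia
  have hbot : bottomCorners (e none) ⊆ convexHull ℝ (pairVertices e) :=
    subset_union_left.trans (subset_convexHull ℝ _)
  refine ⟨pairVertices e, convexHull ℝ (pairVertices e), finite_pairVertices, rfl,
    convexHull_pairVertices_subset_cube, ?_, ?_⟩
  · exact Lk_two_eq_integerHull (convex_convexHull ℝ _) convexHull_pairVertices_subset_cube hbot
      fun _ => flag_ne_one_of_mem_Lop
  · exact integerHull_ssubset_biInter_SN (convex_convexHull ℝ _) hbot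
      (fun _ => flag_ne_one_of_mem_Lop)
      fun _ => inter_nonempty_of_mem_SN_convexHull_pairVertices (by simp) le_rfl

theorem stmt14 (n : ℕ) (hn : 7 ≤ n) (hmod : n % 6 = 1) :
    ∃ (V : Set (Fin n → ℝ)) (P : Set (Fin n → ℝ)), V.Finite ∧ P = convexHull ℝ V ∧
      P ⊆ cube n ∧
      Lk n 2 P = integerHull n P ∧
      integerHull n P ⊂ ⋂ Q ∈ SN n (2 ^ ((n - 1) / 6)) P, Q :=
  stmt14_general n ((n - 1) / 6) (by lia)
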